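/- Let m be a positive integer divisible by 4, and let v : Z_m → {0,1} be the indicator of {0, m/2}. Let C(v) be the corresponding circulant matrix, let X be the set of rows with even index and Y the set of columns with odd index. Then |X| = |Y| = m/2 and every entry of C(v) in positions X × Y is 0. Consequently, for every ε < 1/2 and every δ > 0, C(v) is not (ε,δ)-balanced. -/

import Mathlib

open Finset

/-- Number of 1-entries (resp. edges) of a 0/1 matrix (resp. bipartite adjacency relation)
`Q` in positions `X × Y`. -/
def ones {α β : Type*} [DecidableEq α] [DecidableEq β]
    (Q : α → β → Bool) (X : Finset α) (Y : Finset β) : ℕ :=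
  ((X ×ˢ Y).filter fun p => Q p.1 p.2).card

/-- The density of `Q` on `X × Y`: the number of 1-entries (edges) in `X × Y`
divided by `|X|·|Y|`. -/
noncomputable def dens {α β : Type*} [DecidableEq α] [DecidableEq β]
    (Q : α → β → Bool) (X : Finset α) (Y : Finset β) : ℝ :=
  (ones Q X Y : ℝ) / ((X.card : ℝ) * (Y.card : ℝ))

/-- A 0/1 matrix `Q` (rows `α`, columns `β`) is `ε`-balanced if for all subsets
`X` of rows and `Y` of columns with `|X| > ε·|A|` and `|Y| > ε·|B|`, the density of `Q`
on `X × Y` differs from the density `d(Q)` of the whole matrix by less than `ε`. -/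
def IsEpsBalanced {α β : Type*} [Fintype α] [Fintype β] [DecidableEq α] [DecidableEq β]
    (ε : ℝ) (Q : α → β → Bool) : Prop :=
  ∀ X : Finset α, ∀ Y : Finset β,
    (X.card : ℝ) > ε * (Fintype.card α : ℝ) → (Y.card : ℝ) > ε * (Fintype.card β : ℝ) →
    |dens Q X Y - dens Q univ univ| < ε

/-- A 0/1 matrix `Q` is `(ε,δ)`-balanced if it is `ε`-balanced, the number of 1-entries
in `X × Y` exceeds `δ·|X|·|Y|` for all `X`, `Y` with `|X| > ε·|A|` and `|Y| > ε·|B|`,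
and every row has more than `δ·|B|` ones and every column more than `δ·|A|` ones. -/
def IsEpsDeltaBalanced {α β : Type*} [Fintype α] [Fintype β] [DecidableEq α] [DecidableEq β]
    (ε δ : ℝ) (Q : α → β → Bool) : Prop :=
  IsEpsBalanced ε Q ∧
  (∀ X : Finset α, ∀ Y : Finset β,
    (X.card : ℝ) > ε * (Fintype.card α : ℝ) → (Y.card : ℝ) > ε * (Fintype.card β : ℝ) →
    (ones Q X Y : ℝ) > δ * (X.card : ℝ) * (Y.card : ℝ)) ∧
  (∀ a : α, (ones Q {a} univ : ℝ) > δ * (Fintype.card β : ℝ)) ∧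
  (∀ b : β, (ones Q univ {b} : ℝ) > δ * (Fintype.card α : ℝ))

/-- The circulant 0/1 matrix of a vector `v : Z_m → {0,1}`:
entry `(i, j)` equals `v (j - i mod m)`. -/
def circ {m : ℕ} (v : Fin m → Bool) : Fin m → Fin m → Bool :=
  fun i j => v (j - i)

/-!
Entry `(i, j)` of a circulant depends only on `j - i`, and when `d ∣ m` the residue of `j - i`
modulo `d` is well defined. Hence if `v` vanishes on one residue class modulo `d`, then every pair
of classes of rows and columns differing by it spans an all-zero submatrix, which contains a
fraction `1 / d` of the rows and of the columns. For the two diagonals `0` and `m / 2`, both even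
since `4 ∣ m`, take `d = 2` and the odd class.
-/

theorem ones_eq_zero_iff {α β : Type*} [DecidableEq α] [DecidableEq β]
    {Q : α → β → Bool} {X : Finset α} {Y : Finset β} :
    ones Q X Y = 0 ↔ ∀ i ∈ X, ∀ j ∈ Y, Q i j = false := by
  simp only [ones, card_eq_zero, filter_eq_empty_iff, Prod.forall, mem_product,
    Bool.not_eq_true, and_imp]
  exact ⟨fun h i hi j hj => h i j hi hj, fun h i j hi hj => h i hi j hj⟩

theorem not_isEpsDeltaBalanced_of_forall_eq_false {α β : Type*} [Fintype α] [Fintype β]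
    [DecidableEq α] [DecidableEq β] {ε δ : ℝ} {Q : α → β → Bool} {X : Finset α} {Y : Finset β}
    (hX : ε * Fintype.card α < #X) (hY : ε * Fintype.card β < #Y) (hδ : 0 ≤ δ)
    (hQ : ∀ i ∈ X, ∀ j ∈ Y, Q i j = false) : ¬ IsEpsDeltaBalanced ε δ Q := by
  rintro ⟨-, hones, -⟩
  have hlt : δ * #X * #Y < ones Q X Y := hones X Y hX hY
  rw [ones_eq_zero_iff.mpr hQ, Nat.cast_zero] at hlt
  exact hlt.not_ge (by positivity)

theorem card_filter_val_modEq {m d : ℕ} (hd : d ∣ m) (a : ℕ) :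
    #{i : Fin m | (i : ℕ) ≡ a [MOD d]} = m / d := by
  rcases m.eq_zero_or_pos with rfl | hm
  · simp
  calc #{i : Fin m | (i : ℕ) ≡ a [MOD d]}
      = m.count (· ≡ a [MOD d]) := by
        rw [Nat.count_eq_card_filter_range, card_filter, card_filter]
        exact Fin.sum_univ_eq_sum_range (fun i => if i ≡ a [MOD d] then 1 else 0) m
    _ = m / d := by
        simp [Nat.count_modEq_card m (Nat.pos_of_dvd_of_pos hd hm), Nat.mod_eq_zero_of_dvd hd]

theorem val_sub_add_val_modEq {m d : ℕ} (hd : d ∣ m) (i j : Fin m) :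
    ((j - i : Fin m) : ℕ) + i ≡ j [MOD d] := by
  have : NeZero m := ⟨i.pos.ne'⟩
  have hmod : ((j - i : Fin m) : ℕ) + i ≡ j [MOD m] := by
    rw [Nat.ModEq, ← Fin.val_add, sub_add_cancel, Nat.mod_eq_of_lt j.isLt]
  exact hmod.of_dvd hd

theorem circ_eq_false_of_modEq {m d a b : ℕ} (hd : d ∣ m) {v : Fin m → Bool}
    (hv : ∀ k : Fin m, (k : ℕ) + a ≡ b [MOD d] → v k = false) {i j : Fin m}
    (hi : (i : ℕ) ≡ a [MOD d]) (hj : (j : ℕ) ≡ b [MOD d]) : circ v i j = false :=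
  hv (j - i) <| (hi.symm.add_left _).trans <| (val_sub_add_val_modEq hd i j).trans hj

theorem two_diagonals_not_eps_delta_balanced_general {m d a b : ℕ} (hm : 0 < m) (hd : d ∣ m)
    (v : Fin m → Bool) (hv : ∀ k : Fin m, (k : ℕ) + a ≡ b [MOD d] → v k = false) :
    ∀ X Y : Finset (Fin m),
      X = univ.filter (fun i : Fin m => (i : ℕ) ≡ a [MOD d]) →
      Y = univ.filter (fun j : Fin m => (j : ℕ) ≡ b [MOD d]) →
      X.card = m / d ∧ Y.card = m / d ∧
      (∀ i ∈ X, ∀ j ∈ Y, circ v i j = false) ∧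
      (∀ ε δ : ℝ, ε < 1 / d → 0 ≤ δ → ¬ IsEpsDeltaBalanced ε δ (circ v)) := by
  intro X Y hX hY
  have hXcard : #X = m / d := hX ▸ card_filter_val_modEq hd a
  have hYcard : #Y = m / d := hY ▸ card_filter_val_modEq hd b
  have hzero : ∀ i ∈ X, ∀ j ∈ Y, circ v i j = false := fun i hi j hj =>
    circ_eq_false_of_modEq hd hv (by simpa [hX] using hi) (by simpa [hY] using hj)
  refine ⟨hXcard, hYcard, hzero, fun ε δ hε hδ => ?_⟩
  have hlarge : ε * Fintype.card (Fin m) < (m / d : ℕ) := by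
    calc ε * Fintype.card (Fin m) = ε * m := by rw [Fintype.card_fin]
      _ < 1 / d * m := by gcongr
      _ = (m / d : ℕ) := by rw [Nat.cast_div_charZero hd, one_div_mul_eq_div]
  exact not_isEpsDeltaBalanced_of_forall_eq_false (hXcard ▸ hlarge) (hYcard ▸ hlarge) hδ hzero

/-- Let `m` be a positive integer divisible by 4 and let `v : Z_m → {0,1}` be the
indicator of `{0, m/2}`. Taking `X` to be the even-indexed rows and `Y` the odd-indexed
columns of the circulant `C(v)`, one has `|X| = |Y| = m/2` and every entry of `C(v)` in
positions `X × Y` is `0`. Consequently, for every `ε < 1/2` and every `δ > 0`, `C(v)` is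
not `(ε,δ)`-balanced. -/
theorem two_diagonals_not_eps_delta_balanced {m : ℕ} (hm : 0 < m) (h4 : 4 ∣ m)
    (v : Fin m → Bool) (hv : ∀ k : Fin m, v k = true ↔ ((k : ℕ) = 0 ∨ (k : ℕ) = m / 2)) :
    ∀ X Y : Finset (Fin m),
      X = univ.filter (fun i : Fin m => (i : ℕ) % 2 = 0) →
      Y = univ.filter (fun j : Fin m => (j : ℕ) % 2 = 1) →
      X.card = m / 2 ∧ Y.card = m / 2 ∧
      (∀ i ∈ X, ∀ j ∈ Y, circ v i j = false) ∧
      (∀ ε δ : ℝ, ε < 1 / 2 → 0 < δ → ¬ IsEpsDeltaBalanced ε δ (circ v)) := by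
  have hodd : ∀ k : Fin m, (k : ℕ) + 0 ≡ 1 [MOD 2] → v k = false := fun k hk => by
    rw [← Bool.not_eq_true, hv]
    unfold Nat.ModEq at hk
    omega
  intro X Y hX hY
  obtain ⟨hXcard, hYcard, hzero, hnot⟩ :=
    two_diagonals_not_eps_delta_balanced_general hm ((by norm_num : 2 ∣ 4).trans h4) v hodd
      X Y hX hY
  exact ⟨hXcard, hYcard, hzero, fun ε δ hε hδ => hnot ε δ (mod_cast hε) hδ.le⟩
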